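/- For every integer n ≥ 3, let S_n = {a ∈ ℕ : a = x_1² + ⋯ + x_n² for some nonnegative integers x_1, …, x_n} be the set of positive integers that are sums of n squares (zero summands permitted). Then for every prime p, the quotient set R(S_n) is dense in ℚ_p. -/

import Mathlib

/-!
Every positive rational is exactly a quotient of two positive sums of three squares, and the
positive rationals are dense in `ℚ_[p]`.

For the first point it is enough to find, for each `m : ℕ`, a positive sum of two squares `k` such
that `m * k` is a sum of three squares, since `s / t = (s * t * k) / (t ^ 2 * k)`. By Lagrange,
`m` is the norm of an integral quaternion `q`; a nonzero pure quaternion `v` orthogonal to the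
imaginary part of `q` makes `q * v` pure as well, so that `m * N(v) = N(q * v)` is a sum of three
squares. For `q = a + b i + c j + d k` one can take `v = c i - b j`, unless `b = c = 0`, in which
case `m` itself is a sum of two squares.

For the second point, adding a large multiple of a high power of `p` to a rational makes it
positive while moving it very little `p`-adically.
-/

theorem exists_mul_eq_sum_three_squares (m : ℕ) :
    ∃ u v : ℕ, 0 < u ^ 2 + v ^ 2 ∧ ∃ x y z : ℕ, m * (u ^ 2 + v ^ 2) = x ^ 2 + y ^ 2 + z ^ 2 := by
  obtain ⟨a, b, c, d, rfl⟩ := Nat.sum_four_squares m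
  by_cases h : b = 0 ∧ c = 0
  · obtain ⟨rfl, rfl⟩ := h
    exact ⟨1, 0, by norm_num, a, d, 0, by ring⟩
  -- `x, y, z` are, up to sign and order, the coordinates of `(a + b i + c j + d k) (c i - b j)`.
  · refine ⟨b, c, ?_, a * c + d * b, ((d : ℤ) * c - a * b).natAbs, b ^ 2 + c ^ 2, ?_⟩
    · by_contra h0
      apply h
      constructor <;> nlinarith
    · zify
      rw [sq_abs]
      ring

theorem exists_fin_sum_three_squares {n : ℕ} (hn : 3 ≤ n) (a b c : ℕ) :
    ∃ x : Fin n → ℕ, a ^ 2 + b ^ 2 + c ^ 2 = ∑ i, (x i) ^ 2 := by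
  obtain ⟨k, rfl⟩ := Nat.exists_eq_add_of_le' hn
  refine ⟨Fin.cons a (Fin.cons b (Fin.cons c 0)), ?_⟩
  simp [Fin.sum_univ_succ]
  ring

theorem exists_pos_rat_near (p : ℕ) [Fact p.Prime] (x : ℚ_[p]) {ε : ℝ} (hε : 0 < ε) :
    ∃ r : ℚ, 0 < r ∧ ‖x - r‖ < ε := by
  obtain ⟨r, hr⟩ := Padic.rat_dense p x (half_pos hε)
  obtain ⟨k, hk⟩ := exists_pow_lt_of_lt_one (half_pos hε) (Padic.norm_p_lt_one (p := p))
  obtain ⟨N, hN⟩ := exists_nat_gt |r|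
  have hp : (1 : ℚ) ≤ (p : ℚ) ^ k :=
    one_le_pow₀ (by exact_mod_cast (Fact.out : p.Prime).one_lt.le)
  refine ⟨r + (p : ℚ) ^ k * N, ?_, ?_⟩
  · have h1 := neg_abs_le r
    have h2 : (N : ℚ) ≤ (p : ℚ) ^ k * N := le_mul_of_one_le_left (Nat.cast_nonneg N) hp
    linarith
  · have hsmall : ‖(p : ℚ_[p]) ^ k * (N : ℚ_[p])‖ ≤ ‖(p : ℚ_[p])‖ ^ k := by
      rw [norm_mul, norm_pow]
      exact mul_le_of_le_one_right (by positivity)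
        (by exact_mod_cast Padic.norm_int_le_one (N : ℤ))
    have heq : x - ((r + (p : ℚ) ^ k * N : ℚ) : ℚ_[p])
        = (x - r) - (p : ℚ_[p]) ^ k * (N : ℚ_[p]) := by
      push_cast
      ring
    rw [heq]
    have := norm_sub_le (x - (r : ℚ_[p])) ((p : ℚ_[p]) ^ k * (N : ℚ_[p]))
    linarith

/-- For `n ≥ 3`, the quotient set of the set `Sₙ` of positive integers that are
sums of `n` squares (zero permitted) is dense in every `ℚ_[p]`. -/
theorem sums_of_n_squares_quotient_dense
    (n : ℕ) (hn : 3 ≤ n) (p : ℕ) [Fact p.Prime] :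
    Dense ((fun q : ℚ => (q : ℚ_[p])) ''
      {q : ℚ | ∃ a ∈ {a : ℕ | 0 < a ∧ ∃ x : Fin n → ℕ, a = ∑ i, (x i) ^ 2},
               ∃ b ∈ {a : ℕ | 0 < a ∧ ∃ x : Fin n → ℕ, a = ∑ i, (x i) ^ 2},
               q = (a : ℚ) / (b : ℚ)}) := by

  rw [Metric.dense_iff]
  intro x ε hε
  obtain ⟨q, hq, hxq⟩ := exists_pos_rat_near p x hε
  refine ⟨(q : ℚ_[p]), ?_, q, ?_, rfl⟩
  · rwa [Metric.mem_ball, dist_comm, dist_eq_norm]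
  obtain ⟨s, hs⟩ := Int.eq_ofNat_of_zero_le (Rat.num_pos.2 hq).le
  have hs0 : 0 < s := by
    have := Rat.num_pos.2 hq
    omega
  have ht0 : 0 < q.den := q.den_pos
  obtain ⟨u, v, hk, a, b, c, habc⟩ := exists_mul_eq_sum_three_squares (s * q.den)
  -- With `q = s / t`, the denominator `t ^ 2 * (u ^ 2 + v ^ 2)` is even a sum of two squares.
  refine ⟨s * q.den * (u ^ 2 + v ^ 2), ⟨by positivity, ?_⟩,
    q.den ^ 2 * (u ^ 2 + v ^ 2), ⟨by positivity, ?_⟩, ?_⟩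
  · rw [habc]
    exact exists_fin_sum_three_squares hn a b c
  · obtain ⟨f, hf⟩ := exists_fin_sum_three_squares hn (q.den * u) (q.den * v) 0
    exact ⟨f, by rw [← hf]; ring⟩
  · have hq' : q = (s : ℚ) / q.den := by
      conv_lhs => rw [← Rat.num_div_den q, hs]
      simp
    have ht : (q.den : ℚ) ≠ 0 := by positivity
    have hk' : ((u : ℚ) ^ 2 + (v : ℚ) ^ 2) ≠ 0 := by exact_mod_cast hk.ne'
    conv_lhs => rw [hq']
    push_cast
    field_simp
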